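/- arXiv:1607.02563 — 3 statements merged into one kernel-verified Lean document; each statement's English description precedes it below -/
import Mathlib

section
/- Let B be a real separable Banach space, (Ω, 𝓕, ℙ) a probability space, and X : B × Ω → B jointly measurable; write X^x := X(x,·). Assume the probability measure μ on B is invariant for the Markov operator P f(x) := E[f(X^x)], i.e. ∫_B P f dμ = ∫_B f dμ for all bounded measurable f. Fix k ∈ B and suppose there is a jointly measurable family M : B × Ω → ℝ with ∫_B E[M_x²] μ(dx) < ∞ such that E[(∂_k f)(X^x)] = E[f(X^x) M_x] for every f ∈ C_b²(B) and μ-a.e. x ∈ B. Then for all f, g ∈ C_b²(B): ℰ_k(f,g) = ∫_B E[ (f·∂_k g)(X^x) · M_x ] μ(dx) − ∫_B f · ∂_k² g dμ. -/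
open MeasureTheory Filter

/-- `f ∈ C_b²(B)`: `f` is twice continuously Fréchet differentiable, bounded, with bounded
first and second Fréchet derivatives. -/
def IsCb2 {B : Type*} [NormedAddCommGroup B] [NormedSpace ℝ B] (f : B → ℝ) : Prop :=
  ContDiff ℝ 2 f ∧ (∃ c, ∀ x, |f x| ≤ c) ∧ (∃ c, ∀ x, ‖fderiv ℝ f x‖ ≤ c) ∧
    (∃ c, ∀ x, ‖fderiv ℝ (fderiv ℝ f) x‖ ≤ c)

/-!
With `h = f * ∂_k g`, the product rule gives `∂_k h = ∂_k f * ∂_k g + f * ∂_k² g`, so integrating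
the integration by parts formula for `h` against the invariant measure is the claim. Since `∂_k g`
is only `C¹`, `h` is not an admissible test function. The products of `f` with the difference
quotients `(g (x + t k) - g x) / t` are admissible; their derivatives along `k` involve only `f`,
`∂_k f` and the difference quotients of `g` and `∂_k g`, all bounded uniformly in `t`, so dominated
convergence lets `t` tend to `0`.
-/

open scoped Topology

section Cb

variable {E F A : Type*} [NormedAddCommGroup E] [NormedSpace ℝ E] [NormedAddCommGroup F]
  [NormedSpace ℝ F] [NormedRing A] [NormedAlgebra ℝ A] {n : ℕ}

/-- The space `C_bⁿ(E, F)` of `n` times continuously differentiable functions that are bounded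
together with their derivatives up to order `n`. Boundedness is imposed on `iteratedFDeriv`, so that
all orders, including `f` itself at order `0`, are treated alike. -/
def IsCb (n : ℕ) (f : E → F) : Prop :=
  ContDiff ℝ n f ∧ ∀ i ≤ n, ∃ c, ∀ x, ‖iteratedFDeriv ℝ i f x‖ ≤ c

theorem isCb2_iff_isCb {f : E → ℝ} : IsCb2 f ↔ IsCb 2 f := by
  have norm_iteratedFDeriv_two (x : E) :
      ‖iteratedFDeriv ℝ 2 f x‖ = ‖fderiv ℝ (fderiv ℝ f) x‖ := by
    rw [← norm_iteratedFDeriv_fderiv, norm_iteratedFDeriv_one]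
  refine and_congr Iff.rfl ⟨fun ⟨h₀, h₁, h₂⟩ i hi ↦ ?_, fun h ↦ ⟨?_, ?_, ?_⟩⟩
  · interval_cases i
    · simpa only [norm_iteratedFDeriv_zero] using! h₀
    · simpa only [norm_iteratedFDeriv_one] using! h₁
    · simpa only [norm_iteratedFDeriv_two] using! h₂
  · simpa only [norm_iteratedFDeriv_zero] using! h 0 (by norm_num)
  · simpa only [norm_iteratedFDeriv_one] using! h 1 (by norm_num)
  · simpa only [norm_iteratedFDeriv_two] using! h 2 le_rfl

namespace IsCb

theorem exists_norm_le {f : E → F} (hf : IsCb n f) : ∃ c, ∀ x, ‖f x‖ ≤ c := by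
  simpa only [norm_iteratedFDeriv_zero] using hf.2 0 n.zero_le

theorem differentiable {f : E → F} (hf : IsCb (n + 1) f) : Differentiable ℝ f :=
  hf.1.differentiable (by simp)

theorem exists_norm_fderiv_le {f : E → F} (hf : IsCb (n + 1) f) :
    ∃ c, ∀ x, ‖fderiv ℝ f x‖ ≤ c := by
  simpa only [norm_iteratedFDeriv_one] using hf.2 1 (by simp)

theorem fderiv_apply {f : E → F} (hf : IsCb (n + 1) f) (k : E) :
    IsCb n (fun x ↦ fderiv ℝ f x k) := by
  have contDiff_fderiv : ContDiff ℝ n (fderiv ℝ f) := hf.1.fderiv_right (by simp)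
  refine ⟨contDiff_fderiv.clm_apply contDiff_const, fun i hi ↦ ?_⟩
  obtain ⟨c, hc⟩ := hf.2 (i + 1) (by lia)
  refine ⟨‖k‖ * c, fun x ↦ ?_⟩
  calc ‖iteratedFDeriv ℝ i (fun x ↦ fderiv ℝ f x k) x‖
      ≤ ‖k‖ * ‖iteratedFDeriv ℝ i (fderiv ℝ f) x‖ :=
        norm_iteratedFDeriv_clm_apply_const contDiff_fderiv.contDiffAt (by exact_mod_cast hi)
    _ = ‖k‖ * ‖iteratedFDeriv ℝ (i + 1) f x‖ := by rw [norm_iteratedFDeriv_fderiv]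
    _ ≤ ‖k‖ * c := by gcongr; exact hc x

theorem comp_add_right {f : E → F} (hf : IsCb n f) (a : E) : IsCb n (fun x ↦ f (x + a)) := by
  refine ⟨hf.1.comp (contDiff_id.add contDiff_const), fun i hi ↦ ?_⟩
  obtain ⟨c, hc⟩ := hf.2 i hi
  exact ⟨c, fun x ↦ by rw [iteratedFDeriv_comp_add_right]; exact hc _⟩

theorem sub {f g : E → F} (hf : IsCb n f) (hg : IsCb n g) : IsCb n (f - g) := by
  refine ⟨hf.1.sub hg.1, fun i hi ↦ ?_⟩
  obtain ⟨a, ha⟩ := hf.2 i hi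
  obtain ⟨b, hb⟩ := hg.2 i hi
  have hi' : (i : WithTop ℕ∞) ≤ n := by exact_mod_cast hi
  refine ⟨a + b, fun x ↦ ?_⟩
  rw [iteratedFDeriv_sub_apply (hf.1.of_le hi').contDiffAt (hg.1.of_le hi').contDiffAt]
  exact (norm_sub_le _ _).trans (add_le_add (ha x) (hb x))

theorem const_smul {f : E → F} (hf : IsCb n f) (r : ℝ) : IsCb n (r • f) := by
  refine ⟨hf.1.const_smul r, fun i hi ↦ ?_⟩
  obtain ⟨c, hc⟩ := hf.2 i hi
  refine ⟨‖r‖ * c, fun x ↦ ?_⟩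
  rw [iteratedFDeriv_const_smul_apply (hf.1.of_le (by exact_mod_cast hi)).contDiffAt, norm_smul]
  gcongr
  exact hc x

theorem mul {f g : E → A} (hf : IsCb n f) (hg : IsCb n g) : IsCb n (fun x ↦ f x * g x) := by
  refine ⟨hf.1.mul hg.1, fun i hi ↦ ?_⟩
  choose! a ha using hf.2
  choose! b hb using hg.2
  refine ⟨∑ j ∈ Finset.range (i + 1), (i.choose j : ℝ) * a j * b (i - j), fun x ↦ ?_⟩
  refine (norm_iteratedFDeriv_mul_le hf.1 hg.1 x (by exact_mod_cast hi)).trans ?_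
  refine Finset.sum_le_sum fun j hj ↦ ?_
  have hjn : j ≤ n := by grind
  have a_nonneg : 0 ≤ a j := (norm_nonneg _).trans (ha j hjn x)
  gcongr
  · exact ha j hjn x
  · exact hb (i - j) (by lia) x

end IsCb

end Cb

section DiffQuot

variable {E F : Type*} [NormedAddCommGroup E] [NormedSpace ℝ E] [NormedAddCommGroup F]
  [NormedSpace ℝ F] {g : E → F} {n : ℕ}

/-- The difference quotient `(g (x + t k) - g x) / t` of `g` along `k`, approximating `∂_k g` by
functions as smooth as `g`. Its value at `t = 0` is `0`. -/
noncomputable def diffQuot (g : E → F) (k : E) (t : ℝ) (x : E) : F :=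
  t⁻¹ • (g (x + t • k) - g x)

theorem IsCb.diffQuot (hg : IsCb n g) (k : E) (t : ℝ) : IsCb n (diffQuot g k t) :=
  ((hg.comp_add_right (t • k)).sub hg).const_smul t⁻¹

theorem fderiv_diffQuot_apply (hg : Differentiable ℝ g) (k v : E) (t : ℝ) (x : E) :
    fderiv ℝ (diffQuot g k t) x v = diffQuot (fun y ↦ fderiv ℝ g y v) k t x := by
  have hasFDerivAt_shift :
      HasFDerivAt (fun y ↦ g (y + t • k)) (fderiv ℝ g (x + t • k)) x :=
    (hasFDerivAt_comp_add_right (t • k)).2 (hg _).hasFDerivAt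
  have hasFDerivAt_diffQuot :
      HasFDerivAt (diffQuot g k t) (t⁻¹ • (fderiv ℝ g (x + t • k) - fderiv ℝ g x)) x :=
    (hasFDerivAt_shift.sub (hg x).hasFDerivAt).const_smul t⁻¹
  rw [hasFDerivAt_diffQuot.fderiv]
  rfl

theorem norm_diffQuot_le {C : ℝ} (hg : Differentiable ℝ g) (hC : ∀ x, ‖fderiv ℝ g x‖ ≤ C)
    (k : E) (t : ℝ) (x : E) : ‖diffQuot g k t x‖ ≤ C * ‖k‖ := by
  have C_nonneg : 0 ≤ C := (norm_nonneg _).trans (hC x)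
  rcases eq_or_ne t 0 with rfl | ht
  · simpa [diffQuot] using mul_nonneg C_nonneg (norm_nonneg k)
  have mean_value : ‖g (x + t • k) - g x‖ ≤ C * ‖x + t • k - x‖ :=
    convex_univ.norm_image_sub_le_of_norm_fderiv_le (fun y _ ↦ hg y) (fun y _ ↦ hC y)
      trivial trivial
  calc ‖diffQuot g k t x‖ = ‖t‖⁻¹ * ‖g (x + t • k) - g x‖ := by
        rw [diffQuot, norm_smul, norm_inv]
    _ ≤ ‖t‖⁻¹ * (C * (‖t‖ * ‖k‖)) := by
        rw [add_sub_cancel_left, norm_smul] at mean_value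
        gcongr
    _ = C * ‖k‖ := by
        have := norm_ne_zero_iff.2 ht
        field_simp

theorem tendsto_diffQuot {x : E} (hg : DifferentiableAt ℝ g x) (k : E) :
    Tendsto (fun t ↦ diffQuot g k t x) (𝓝[≠] 0) (𝓝 (fderiv ℝ g x k)) :=
  (hg.hasFDerivAt.hasLineDerivAt k).tendsto_slope_zero

end DiffQuot

section Integral

variable {B S : Type*} [NormedAddCommGroup B] [NormedSpace ℝ B] [MeasurableSpace B]
  [OpensMeasurableSpace B] [MeasurableSpace S] {μ : Measure B} {ν : Measure S} {X : S → B}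
  {M w : S → ℝ} {n : ℕ}

theorem IsCb.integrable_comp_mul {h : B → ℝ} (hh : IsCb n h) (hX : AEMeasurable X ν)
    (hw : Integrable w ν) : Integrable (fun p ↦ h (X p) * w p) ν := by
  obtain ⟨c, hc⟩ := hh.exists_norm_le
  have aemeasurable_comp : AEMeasurable (fun p ↦ h (X p)) ν :=
    hh.1.continuous.measurable.comp_aemeasurable hX
  exact hw.bdd_mul aemeasurable_comp.aestronglyMeasurable (.of_forall fun p ↦ hc (X p))

theorem IsCb.integrable [IsFiniteMeasure μ] {h : B → ℝ} (hh : IsCb n h) : Integrable h μ := by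
  simpa using hh.integrable_comp_mul aemeasurable_id (integrable_const (1 : ℝ))

theorem tendsto_integral_diffQuot_comp_mul {g : B → ℝ} (hg : IsCb (n + 1) g)
    (hX : AEMeasurable X ν) (hw : Integrable w ν) (k : B) :
    Tendsto (fun t ↦ ∫ p, diffQuot g k t (X p) * w p ∂ν) (𝓝[≠] 0)
      (𝓝 (∫ p, fderiv ℝ g (X p) k * w p ∂ν)) := by
  obtain ⟨C, hC⟩ := hg.exists_norm_fderiv_le
  refine tendsto_integral_filter_of_dominated_convergence (fun p ↦ C * ‖k‖ * ‖w p‖) ?_ ?_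
    (hw.norm.const_mul _)
    (.of_forall fun p ↦ (tendsto_diffQuot (hg.differentiable _) k).mul_const _)
  · exact .of_forall fun t ↦ ((hg.diffQuot k t).integrable_comp_mul hX hw).aestronglyMeasurable
  · refine .of_forall fun t ↦ .of_forall fun p ↦ ?_
    rw [norm_mul]
    gcongr
    exact norm_diffQuot_le hg.differentiable hC k t (X p)

theorem integral_diffQuot_mul_add_eq [IsFiniteMeasure μ] {k : B}
    (hIBP : ∀ h : B → ℝ, IsCb (n + 1) h → ∫ x, fderiv ℝ h x k ∂μ = ∫ p, h (X p) * M p ∂ν)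
    {f g : B → ℝ} (hf : IsCb (n + 1) f) (hg : IsCb (n + 1) g) (t : ℝ) :
    ∫ x, diffQuot (fun y ↦ fderiv ℝ g y k) k t x * f x ∂μ
        + ∫ x, diffQuot g k t x * fderiv ℝ f x k ∂μ
      = ∫ p, diffQuot g k t (X p) * (f (X p) * M p) ∂ν := by
  have product_rule (x : B) :
      fderiv ℝ (fun y ↦ f y * diffQuot g k t y) x k
        = diffQuot (fun y ↦ fderiv ℝ g y k) k t x * f x
          + diffQuot g k t x * fderiv ℝ f x k := by
    rw [fderiv_fun_mul (hf.differentiable x) ((hg.diffQuot k t).differentiable x),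
      ← fderiv_diffQuot_apply hg.differentiable]
    simp [mul_comm]
  calc ∫ x, diffQuot (fun y ↦ fderiv ℝ g y k) k t x * f x ∂μ
          + ∫ x, diffQuot g k t x * fderiv ℝ f x k ∂μ
      = ∫ x, fderiv ℝ (fun y ↦ f y * diffQuot g k t y) x k ∂μ := by
        simp_rw [product_rule]
        exact (integral_add (((hg.fderiv_apply k).diffQuot k t).integrable_comp_mul
          aemeasurable_id hf.integrable) ((hg.diffQuot k t).integrable_comp_mul
          aemeasurable_id (hf.fderiv_apply k).integrable)).symm
    _ = ∫ p, f (X p) * diffQuot g k t (X p) * M p ∂ν := hIBP _ (hf.mul (hg.diffQuot k t))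
    _ = ∫ p, diffQuot g k t (X p) * (f (X p) * M p) ∂ν := by
        congr! 2 with p
        ring

theorem integral_fderiv_mul_fderiv_eq [IsFiniteMeasure μ] (hX : AEMeasurable X ν)
    (hM : Integrable M ν) {k : B}
    (hIBP : ∀ h : B → ℝ, IsCb (n + 2) h → ∫ x, fderiv ℝ h x k ∂μ = ∫ p, h (X p) * M p ∂ν)
    {f g : B → ℝ} (hf : IsCb (n + 2) f) (hg : IsCb (n + 2) g) :
    ∫ x, fderiv ℝ f x k * fderiv ℝ g x k ∂μ =
      ∫ p, f (X p) * fderiv ℝ g (X p) k * M p ∂ν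
        - ∫ x, f x * fderiv ℝ (fun y ↦ fderiv ℝ g y k) x k ∂μ := by
  have limit_second_order := tendsto_integral_diffQuot_comp_mul (hg.fderiv_apply k)
    aemeasurable_id (hf.integrable (μ := μ)) k
  have limit_form := tendsto_integral_diffQuot_comp_mul hg aemeasurable_id
    ((hf.fderiv_apply k).integrable (μ := μ)) k
  have limit_weighted :=
    tendsto_integral_diffQuot_comp_mul hg hX (hf.integrable_comp_mul hX hM) k
  have limits_eq : ∫ x, fderiv ℝ (fun y ↦ fderiv ℝ g y k) x k * f x ∂μ
        + ∫ x, fderiv ℝ g x k * fderiv ℝ f x k ∂μ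
      = ∫ p, fderiv ℝ g (X p) k * (f (X p) * M p) ∂ν :=
    tendsto_nhds_unique ((limit_second_order.add limit_form).congr
      fun t ↦ integral_diffQuot_mul_add_eq hIBP hf hg t) limit_weighted
  simp only [mul_comm, mul_assoc] at limits_eq ⊢
  linear_combination limits_eq

end Integral

theorem form_identity_from_integration_by_parts_general
    {B : Type*} [NormedAddCommGroup B] [NormedSpace ℝ B] [MeasurableSpace B]
    [OpensMeasurableSpace B] {Ω : Type*} [MeasurableSpace Ω] (ℙ : Measure Ω)
    [IsProbabilityMeasure ℙ] (μ : Measure B) [IsFiniteMeasure μ]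
    (X : B × Ω → B) (hX : AEMeasurable X (μ.prod ℙ))
    (hinv : ∀ f : B → ℝ, Measurable f → (∃ c, ∀ x, |f x| ≤ c) →
      ∫ x, ∫ ω, f (X (x, ω)) ∂ℙ ∂μ = ∫ x, f x ∂μ)
    (k : B) (M : B × Ω → ℝ) (hM : Integrable M (μ.prod ℙ))
    (hIBP : ∀ f : B → ℝ, IsCb2 f →
      ∀ᵐ x ∂μ, ∫ ω, fderiv ℝ f (X (x, ω)) k ∂ℙ = ∫ ω, f (X (x, ω)) * M (x, ω) ∂ℙ)
    (f g : B → ℝ) (hf : IsCb2 f) (hg : IsCb2 g) :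
    ∫ x, (fderiv ℝ f x k) * (fderiv ℝ g x k) ∂μ =
      (∫ x, ∫ ω, (f (X (x, ω)) * fderiv ℝ g (X (x, ω)) k) * M (x, ω) ∂ℙ ∂μ)
        - ∫ x, f x * fderiv ℝ (fun y => fderiv ℝ g y k) x k ∂μ := by
  rw [isCb2_iff_isCb] at hf hg
  have integrated_hIBP (h : B → ℝ) (hh : IsCb 2 h) :
      ∫ x, fderiv ℝ h x k ∂μ = ∫ p, h (X p) * M p ∂(μ.prod ℙ) := by
    have hh' : IsCb 1 (fun x ↦ fderiv ℝ h x k) := hh.fderiv_apply k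
    calc ∫ x, fderiv ℝ h x k ∂μ
        = ∫ x, ∫ ω, fderiv ℝ h (X (x, ω)) k ∂ℙ ∂μ :=
          (hinv _ hh'.1.continuous.measurable hh'.exists_norm_le).symm
      _ = ∫ x, ∫ ω, h (X (x, ω)) * M (x, ω) ∂ℙ ∂μ :=
          integral_congr_ae (hIBP h (isCb2_iff_isCb.2 hh))
      _ = ∫ p, h (X p) * M p ∂(μ.prod ℙ) :=
          (integral_prod _ (hh.integrable_comp_mul hX hM)).symm
  have integrable_comp_mul :
      Integrable (fun p ↦ f (X p) * fderiv ℝ g (X p) k * M p) (μ.prod ℙ) := by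
    simpa only [mul_assoc] using
      hf.integrable_comp_mul hX ((hg.fderiv_apply k).integrable_comp_mul hX hM)
  rw [integral_fderiv_mul_fderiv_eq (n := 0) hX hM integrated_hIBP hf hg,
    integral_prod _ integrable_comp_mul]

/-- The key identity in the proof of Proposition 1.1:
`ℰ_k(f,g) = (ℙ × μ)({f ∂_k g}(X^·) M_·) − μ(f ∂_k² g)`. -/
theorem form_identity_from_integration_by_parts
    {B : Type*} [NormedAddCommGroup B] [NormedSpace ℝ B] [CompleteSpace B]
    [TopologicalSpace.SeparableSpace B] [MeasurableSpace B] [BorelSpace B]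
    {Ω : Type*} [MeasurableSpace Ω] (ℙ : Measure Ω) [IsProbabilityMeasure ℙ]
    (X : B × Ω → B) (hX : Measurable X)
    (μ : Measure B) [IsProbabilityMeasure μ]
    -- invariance of `μ` for the Markov operator `P f (x) = E[f (X^x)]`
    (hinv : ∀ f : B → ℝ, Measurable f → (∃ c, ∀ x, |f x| ≤ c) →
      ∫ x, ∫ ω, f (X (x, ω)) ∂ℙ ∂μ = ∫ x, f x ∂μ)
    (k : B)
    (M : B × Ω → ℝ) (hM : Measurable M)
    -- `M ∈ L²(ℙ × μ)`
    (hM2 : Integrable (fun p => (M p) ^ 2) (μ.prod ℙ))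
    -- integration by parts formula: `P (∂_k f) (x) = E[f (X^x) M_x]` for μ-a.e. `x`
    (hIBP : ∀ f : B → ℝ, IsCb2 f →
      ∀ᵐ x ∂μ, ∫ ω, fderiv ℝ f (X (x, ω)) k ∂ℙ = ∫ ω, f (X (x, ω)) * M (x, ω) ∂ℙ)
    (f g : B → ℝ) (hf : IsCb2 f) (hg : IsCb2 g) :
    ∫ x, (fderiv ℝ f x k) * (fderiv ℝ g x k) ∂μ =
      (∫ x, ∫ ω, (f (X (x, ω)) * fderiv ℝ g (X (x, ω)) k) * M (x, ω) ∂ℙ ∂μ)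
        - ∫ x, f x * fderiv ℝ (fun y => fderiv ℝ g y k) x k ∂μ := by
  have hM1 : Integrable M (μ.prod ℙ) :=
    ((memLp_two_iff_integrable_sq hM.aestronglyMeasurable).2 hM2).integrable one_le_two
  exact form_identity_from_integration_by_parts_general ℙ μ X hX.aemeasurable hinv k M hM1 hIBP
    f g hf hg
end

section
/- Let B be a real separable Banach space, (Ω, 𝓕, ℙ) a probability space, and X : B × Ω → B jointly measurable; write X^x := X(x,·). Assume the probability measure μ on B is invariant for the Markov operator P f(x) := E[f(X^x)], i.e. ∫_B P f dμ = ∫_B f dμ for all bounded measurable f. Fix k ∈ B and suppose there is a jointly measurable family M : B × Ω → ℝ with ∫_B E[M_x²] μ(dx) < ∞ such that E[(∂_k f)(X^x)] = E[f(X^x) M_x] for every f ∈ C_b²(B) and μ-a.e. x ∈ B. Then the Fomin derivative estimate holds: for every f ∈ C_b²(B), |∫_B ∂_k f dμ|² ≤ (∫_B E[M_x²] μ(dx)) · ∫_B f² dμ. -/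
open MeasureTheory Filter

/-!
Invariance says that `X` pushes `μ ⊗ ℙ` forward to `μ`. Averaging the integration by parts formula
over `μ` therefore gives `∫ ∂_k f dμ = ∫ (f ∘ X) M d(μ ⊗ ℙ)`. By Cauchy–Schwarz in `L²(μ ⊗ ℙ)`, the
square of the right-hand side is at most `‖M‖² ‖f ∘ X‖²`, and `‖f ∘ X‖² = ∫ f² dμ` by invariance
again.
-/

section CauchySchwarz

variable {α : Type*} [MeasurableSpace α] {μ : Measure α} {f g : α → ℝ}

theorem inner_toLp_toLp_eq_integral_mul (hf : MemLp f 2 μ) (hg : MemLp g 2 μ) :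
    inner ℝ (hf.toLp f) (hg.toLp g) = ∫ x, f x * g x ∂μ := by
  rw [L2.inner_def]
  refine integral_congr_ae ?_
  filter_upwards [hf.coeFn_toLp, hg.coeFn_toLp] with x hfx hgx
  rw [hfx, hgx, RCLike.inner_apply, conj_trivial, mul_comm]

theorem sq_integral_mul_le (hf : MemLp f 2 μ) (hg : MemLp g 2 μ) :
    (∫ x, f x * g x ∂μ) ^ 2 ≤ (∫ x, f x ^ 2 ∂μ) * ∫ x, g x ^ 2 ∂μ := by
  simpa only [inner_toLp_toLp_eq_integral_mul, ← sq] using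
    real_inner_mul_inner_self_le (hf.toLp f) (hg.toLp g)

end CauchySchwarz

theorem integral_comp_of_measurePreserving {α β E : Type*} [MeasurableSpace α] [MeasurableSpace β]
    [NormedAddCommGroup E] [NormedSpace ℝ E] {μ : Measure α} {ν : Measure β} {φ : α → β}
    (hφ : MeasurePreserving φ μ ν) {g : β → E} (hg : AEStronglyMeasurable g ν) :
    ∫ x, g (φ x) ∂μ = ∫ y, g y ∂ν := by
  rw [← hφ.map_eq] at hg ⊢
  exact (integral_map hφ.aemeasurable hg).symm

section RandomMap

variable {α β Ω : Type*} [MeasurableSpace α] [MeasurableSpace β] [MeasurableSpace Ω]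
  {μ : Measure α} {ν : Measure β} {ℙ : Measure Ω} {X : α × Ω → β}

theorem measurePreserving_prod_of_integral_integral_comp_eq [IsFiniteMeasure μ] [IsFiniteMeasure ν]
    [IsFiniteMeasure ℙ] (hX : Measurable X)
    (hinv : ∀ f : β → ℝ, Measurable f → (∃ c, ∀ y, |f y| ≤ c) →
      ∫ x, ∫ ω, f (X (x, ω)) ∂ℙ ∂μ = ∫ y, f y ∂ν) :
    MeasurePreserving X (μ.prod ℙ) ν := by
  refine ⟨hX, Measure.ext fun s hs => (measureReal_eq_measureReal_iff).1 ?_⟩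
  have hbdd (y : β) : |s.indicator (1 : β → ℝ) y| ≤ 1 := by
    by_cases hy : y ∈ s <;> simp [hy]
  have hmeas : Measurable (s.indicator (1 : β → ℝ)) := measurable_one.indicator hs
  have hint : Integrable (fun p => s.indicator (1 : β → ℝ) (X p)) (μ.prod ℙ) :=
    .of_bound (hmeas.comp hX).aestronglyMeasurable 1 (ae_of_all _ fun p => hbdd (X p))
  calc ((μ.prod ℙ).map X).real s
      = ∫ y, s.indicator 1 y ∂(μ.prod ℙ).map X := (integral_indicator_one hs).symm
    _ = ∫ p, s.indicator 1 (X p) ∂μ.prod ℙ :=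
      integral_map hX.aemeasurable hmeas.aestronglyMeasurable
    _ = ∫ x, ∫ ω, s.indicator 1 (X (x, ω)) ∂ℙ ∂μ := integral_prod _ hint
    _ = ∫ y, s.indicator 1 y ∂ν := hinv _ hmeas ⟨1, hbdd⟩
    _ = ν.real s := integral_indicator_one hs

theorem integral_eq_integral_prod_of_ae_integral_comp_eq [SFinite μ] [SFinite ℙ]
    {E : Type*} [NormedAddCommGroup E] [NormedSpace ℝ E] (hX : MeasurePreserving X (μ.prod ℙ) ν)
    {g : β → E} {h : α × Ω → E} (hg : Integrable g ν) (hh : Integrable h (μ.prod ℙ))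
    (hgh : ∀ᵐ x ∂μ, ∫ ω, g (X (x, ω)) ∂ℙ = ∫ ω, h (x, ω) ∂ℙ) :
    ∫ y, g y ∂ν = ∫ p, h p ∂μ.prod ℙ :=
  calc ∫ y, g y ∂ν
      = ∫ p, g (X p) ∂μ.prod ℙ := (integral_comp_of_measurePreserving hX hg.1).symm
    _ = ∫ x, ∫ ω, g (X (x, ω)) ∂ℙ ∂μ := integral_prod _ (hX.integrable_comp_of_integrable hg)
    _ = ∫ x, ∫ ω, h (x, ω) ∂ℙ ∂μ := integral_congr_ae hgh
    _ = ∫ p, h p ∂μ.prod ℙ := (integral_prod _ hh).symm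

end RandomMap

theorem fomin_derivative_estimate_from_integration_by_parts_general
    {B : Type*} [NormedAddCommGroup B] [NormedSpace ℝ B] [MeasurableSpace B]
    [OpensMeasurableSpace B] {Ω : Type*} [MeasurableSpace Ω]
    {ℙ : Measure Ω} [SFinite ℙ] {μ : Measure B} [SFinite μ]
    {X : B × Ω → B} (hX : MeasurePreserving X (μ.prod ℙ) μ)
    {M : B × Ω → ℝ} (hM : MemLp M 2 (μ.prod ℙ))
    {f : B → ℝ} (hf : Differentiable ℝ f) (hf2 : Integrable (fun x => f x ^ 2) μ)
    {k : B} (hfk : Integrable (fun x => fderiv ℝ f x k) μ)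
    (hIBP : ∀ᵐ x ∂μ,
      ∫ ω, fderiv ℝ f (X (x, ω)) k ∂ℙ = ∫ ω, f (X (x, ω)) * M (x, ω) ∂ℙ) :
    |∫ x, fderiv ℝ f x k ∂μ| ^ 2 ≤
      (∫ x, ∫ ω, M (x, ω) ^ 2 ∂ℙ ∂μ) * ∫ x, f x ^ 2 ∂μ := by
  have hfX : MemLp (fun p => f (X p)) 2 (μ.prod ℙ) :=
    ((memLp_two_iff_integrable_sq hf.continuous.measurable.aestronglyMeasurable).2
      hf2).comp_measurePreserving hX
  have hIBP_integrated : ∫ x, fderiv ℝ f x k ∂μ = ∫ p, f (X p) * M p ∂μ.prod ℙ :=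
    integral_eq_integral_prod_of_ae_integral_comp_eq hX hfk (hfX.integrable_mul hM) hIBP
  calc |∫ x, fderiv ℝ f x k ∂μ| ^ 2
      = (∫ p, f (X p) * M p ∂μ.prod ℙ) ^ 2 := by rw [sq_abs, hIBP_integrated]
    _ ≤ (∫ p, f (X p) ^ 2 ∂μ.prod ℙ) * ∫ p, M p ^ 2 ∂μ.prod ℙ := sq_integral_mul_le hfX hM
    _ = (∫ x, f x ^ 2 ∂μ) * ∫ x, ∫ ω, M (x, ω) ^ 2 ∂ℙ ∂μ := by
        rw [integral_comp_of_measurePreserving hX hf2.1, integral_prod _ hM.integrable_sq]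
    _ = (∫ x, ∫ ω, M (x, ω) ^ 2 ∂ℙ ∂μ) * ∫ x, f x ^ 2 ∂μ := mul_comm _ _

namespace IsCb2

variable {B : Type*} [NormedAddCommGroup B] [NormedSpace ℝ B] {f : B → ℝ}

theorem differentiable (hf : IsCb2 f) : Differentiable ℝ f :=
  hf.1.differentiable two_ne_zero

variable [MeasurableSpace B] [OpensMeasurableSpace B] {μ : Measure B} [IsFiniteMeasure μ]

theorem memLp (hf : IsCb2 f) (p : ENNReal) : MemLp f p μ := by
  obtain ⟨hcont, ⟨c, hc⟩, -⟩ := hf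
  exact .of_bound hcont.continuous.measurable.aestronglyMeasurable c (ae_of_all _ hc)

theorem integrable_fderiv_apply (hf : IsCb2 f) (k : B) :
    Integrable (fun x => fderiv ℝ f x k) μ := by
  obtain ⟨-, -, ⟨c, hc⟩, -⟩ := hf
  exact .of_bound (measurable_fderiv_apply_const ℝ f k).aestronglyMeasurable (c * ‖k‖)
    (ae_of_all _ fun x => (fderiv ℝ f x).le_of_opNorm_le (hc x) k)

end IsCb2

/-- The Fomin derivative estimate `|μ(∂_k f)|² ≤ (ℙ×μ)(|M_·|²) μ(f²)` implied by the
integration by parts formula. -/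
theorem fomin_derivative_estimate_from_integration_by_parts
    {B : Type*} [NormedAddCommGroup B] [NormedSpace ℝ B] [CompleteSpace B]
    [TopologicalSpace.SeparableSpace B] [MeasurableSpace B] [BorelSpace B]
    {Ω : Type*} [MeasurableSpace Ω] (ℙ : Measure Ω) [IsProbabilityMeasure ℙ]
    (X : B × Ω → B) (hX : Measurable X)
    (μ : Measure B) [IsProbabilityMeasure μ]
    -- invariance of `μ` for the Markov operator `P f (x) = E[f (X^x)]`
    (hinv : ∀ f : B → ℝ, Measurable f → (∃ c, ∀ x, |f x| ≤ c) →
      ∫ x, ∫ ω, f (X (x, ω)) ∂ℙ ∂μ = ∫ x, f x ∂μ)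
    (k : B)
    (M : B × Ω → ℝ) (hM : Measurable M)
    -- `M ∈ L²(ℙ × μ)`
    (hM2 : Integrable (fun p => (M p) ^ 2) (μ.prod ℙ))
    -- integration by parts formula: `P (∂_k f) (x) = E[f (X^x) M_x]` for μ-a.e. `x`
    (hIBP : ∀ f : B → ℝ, IsCb2 f →
      ∀ᵐ x ∂μ, ∫ ω, fderiv ℝ f (X (x, ω)) k ∂ℙ = ∫ ω, f (X (x, ω)) * M (x, ω) ∂ℙ)
    (f : B → ℝ) (hf : IsCb2 f) :
    |∫ x, fderiv ℝ f x k ∂μ| ^ 2 ≤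
      (∫ x, ∫ ω, (M (x, ω)) ^ 2 ∂ℙ ∂μ) * ∫ x, (f x) ^ 2 ∂μ := by
  exact fomin_derivative_estimate_from_integration_by_parts_general
    (measurePreserving_prod_of_integral_integral_comp_eq hX hinv)
    ((memLp_two_iff_integrable_sq hM.aestronglyMeasurable).2 hM2)
    hf.differentiable (hf.memLp 2).integrable_sq (hf.integrable_fderiv_apply k) (hIBP f hf)
end

section
/- Let H and E be real Banach spaces, k ∈ H, L ≥ 0, and let b : H → E satisfy ‖b(y + s k) − b(y)‖ ≤ L|s| for all y ∈ H and s ∈ ℝ. For ε > 0 define the Gaussian mollification along k: b_ε(x) := ∫_ℝ b(x + r k) (2πε)^{−1/2} e^{−r²/(2ε)} dr (a Bochner integral, which is well defined since r ↦ b(x + r k) is continuous with at most linear growth). Then for every x ∈ H and every ε > 0, the line derivative of b_ε at x along k exists, i.e. the limit ∂_k b_ε(x) := lim_{s→0} (b_ε(x + s k) − b_ε(x))/s exists in E, and ‖∂_k b_ε(x)‖ ≤ L. -/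
open Real MeasureTheory

/-!
Write `g r = b (x + r • k)`, a Lipschitz function, and let `w` be the Gaussian density. Since
`g (h + r) - g r` is the derivative in `r` of `G_h r = ∫ s in r..h + r, g s`, integration by parts
gives `∫ w r • g (h + r) - ∫ w r • g r = -∫ w' r • G_h r`. The Lipschitz bound yields
`‖G_h r - h • g r‖ ≤ C h²`, so the mollification has derivative `-∫ w' r • g r`. It inherits the
Lipschitz constant of `g` because `w` is a probability density, which bounds that derivative.
-/

open ProbabilityTheory Asymptotics
open scoped NNReal

theorem lipschitzWith_comp_const_add {X Y : Type*} [SeminormedAddCommGroup X]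
    [PseudoEMetricSpace Y] {C : ℝ≥0} {g : X → Y} (hg : LipschitzWith C g) (a : X) :
    LipschitzWith C fun x => g (a + x) := by
  simpa only [mul_one] using! hg.comp (isometry_add_left a).lipschitz

theorem lipschitzWith_comp_line_of_norm_sub_le {H E : Type*} [AddCommGroup H] [Module ℝ H]
    [SeminormedAddCommGroup E] {k : H} {C : ℝ≥0} {b : H → E}
    (hb : ∀ (y : H) (s : ℝ), ‖b (y + s • k) - b y‖ ≤ C * |s|) (x : H) :
    LipschitzWith C fun r : ℝ => b (x + r • k) := by
  refine LipschitzWith.of_dist_le_mul fun s t => ?_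
  rw [dist_eq_norm, dist_eq_norm, Real.norm_eq_abs]
  have increment_le := hb (x + t • k) (s - t)
  rwa [add_assoc, ← add_smul, add_sub_cancel] at increment_le

/-- A weight `w` with finite mass and finite first moment with respect to `μ`: the condition under
which every Lipschitz function can be integrated against `w`. -/
structure HasFiniteFirstMoment {X : Type*} [NormedAddCommGroup X] [NormedSpace ℝ X]
    [MeasurableSpace X] (w : X → ℝ) (μ : Measure X) : Prop where
  integrable : Integrable w μ
  integrable_smul_id : Integrable (fun x => w x • x) μ

section LipschitzIntegrand

variable {X E : Type*} [NormedAddCommGroup X] [NormedSpace ℝ X] [MeasurableSpace X]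
  [OpensMeasurableSpace X] [NormedAddCommGroup E] [NormedSpace ℝ E]
  [SecondCountableTopologyEither X E] {μ : Measure X} {w : X → ℝ} {g : X → E} {C : ℝ≥0}

theorem HasFiniteFirstMoment.integrable_smul_of_lipschitzWith (hw : HasFiniteFirstMoment w μ)
    (hg : LipschitzWith C g) : Integrable (fun x => w x • g x) μ := by
  have growth (x : X) : ‖g x‖ ≤ ‖g 0‖ + C * ‖x‖ := by
    have increment_le : ‖g x - g 0‖ ≤ C * ‖x‖ := by simpa using hg.norm_sub_le x 0
    linarith [norm_sub_norm_le (g x) (g 0)]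
  refine ((hw.integrable.norm.mul_const ‖g 0‖).add (hw.integrable_smul_id.norm.const_mul C)).mono'
    (hw.integrable.aestronglyMeasurable.smul hg.continuous.aestronglyMeasurable)
    (ae_of_all _ fun x => ?_)
  calc ‖w x • g x‖ = ‖w x‖ * ‖g x‖ := norm_smul _ _
    _ ≤ ‖w x‖ * (‖g 0‖ + C * ‖x‖) := by gcongr; exact growth x
    _ = ‖w x‖ * ‖g 0‖ + C * ‖w x • x‖ := by rw [norm_smul]; ring

theorem HasFiniteFirstMoment.norm_integral_smul_comp_add_sub_le (hw : HasFiniteFirstMoment w μ)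
    (hg : LipschitzWith C g) (a c : X) :
    ‖∫ x, w x • g (a + x) ∂μ - ∫ x, w x • g (c + x) ∂μ‖ ≤ C * (∫ x, ‖w x‖ ∂μ) * ‖a - c‖ := by
  have integrable_translate (d : X) : Integrable (fun x => w x • g (d + x)) μ :=
    hw.integrable_smul_of_lipschitzWith (lipschitzWith_comp_const_add hg d)
  rw [← integral_sub (integrable_translate a) (integrable_translate c)]
  calc ‖∫ x, (w x • g (a + x) - w x • g (c + x)) ∂μ‖
      ≤ ∫ x, ‖w x‖ * (C * ‖a - c‖) ∂μ := by
        refine norm_integral_le_of_norm_le (hw.integrable.norm.mul_const _)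
          (ae_of_all _ fun x => ?_)
        rw [← smul_sub, norm_smul]
        gcongr
        simpa only [add_sub_add_right_eq_sub] using hg.norm_sub_le (a + x) (c + x)
    _ = C * (∫ x, ‖w x‖ ∂μ) * ‖a - c‖ := by rw [integral_mul_const]; ring

end LipschitzIntegrand

section LipschitzOnReal

variable {E : Type*} [NormedAddCommGroup E] [NormedSpace ℝ E] [CompleteSpace E]
  {g : ℝ → E} {C : ℝ≥0} {w w' : ℝ → ℝ}

theorem hasDerivAt_intervalIntegral_const_add (hg : Continuous g) (h r : ℝ) :
    HasDerivAt (fun r => ∫ s in r..h + r, g s) (g (h + r) - g r) r := by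
  have split (r : ℝ) : ∫ s in r..h + r, g s = (∫ s in 0..h + r, g s) - ∫ s in 0..r, g s :=
    (intervalIntegral.integral_interval_sub_left (hg.intervalIntegrable _ _)
      (hg.intervalIntegrable _ _)).symm
  simp_rw [split]
  exact ((hg.integral_hasStrictDerivAt 0 (h + r)).hasDerivAt.comp_const_add h r).sub
    (hg.integral_hasStrictDerivAt 0 r).hasDerivAt

theorem lipschitzWith_intervalIntegral_const_add (hg : LipschitzWith C g) (h : ℝ) :
    LipschitzWith (C * ‖h‖₊) fun r => ∫ s in r..h + r, g s := by
  have hderiv := hasDerivAt_intervalIntegral_const_add hg.continuous h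
  refine lipschitzWith_of_nnnorm_deriv_le (fun r => (hderiv r).differentiableAt) fun r => ?_
  have increment_le : ‖g (h + r) - g r‖ ≤ C * ‖h‖ := by
    simpa only [add_sub_cancel_right] using hg.norm_sub_le (h + r) r
  rw [(hderiv r).deriv]
  exact_mod_cast increment_le

theorem norm_intervalIntegral_const_add_sub_smul_le (hg : LipschitzWith C g) (h r : ℝ) :
    ‖(∫ s in r..h + r, g s) - h • g r‖ ≤ C * h ^ 2 := by
  have deviation : (∫ s in r..h + r, g s) - h • g r = ∫ s in r..h + r, (g s - g r) := by
    rw [intervalIntegral.integral_sub (hg.continuous.intervalIntegrable _ _)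
      intervalIntegrable_const, intervalIntegral.integral_const, add_sub_cancel_right]
  have increment_le (s : ℝ) (hs : s ∈ Set.uIoc r (h + r)) : ‖g s - g r‖ ≤ C * |h| := by
    refine (hg.norm_sub_le s r).trans ?_
    gcongr
    simpa using Set.abs_sub_left_of_mem_uIcc (Set.uIoc_subset_uIcc hs)
  calc ‖(∫ s in r..h + r, g s) - h • g r‖ ≤ C * |h| * |h + r - r| := by
        rw [deviation]
        exact intervalIntegral.norm_integral_le_of_norm_le_const increment_le
    _ = C * h ^ 2 := by rw [add_sub_cancel_right, mul_assoc, abs_mul_abs_self, sq]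

theorem integral_smul_comp_add_sub_eq_neg_integral_deriv_smul (hg : LipschitzWith C g)
    (hderiv : ∀ r, HasDerivAt w (w' r) r) (hw : HasFiniteFirstMoment w volume)
    (hw' : HasFiniteFirstMoment w' volume) (h : ℝ) :
    (∫ r, w r • g (h + r)) - ∫ r, w r • g r = -∫ r, w' r • ∫ s in r..h + r, g s := by
  have hg_translate := lipschitzWith_comp_const_add hg h
  have hG := lipschitzWith_intervalIntegral_const_add hg h
  rw [← integral_sub (hw.integrable_smul_of_lipschitzWith hg_translate)
    (hw.integrable_smul_of_lipschitzWith hg)]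
  simp_rw [← smul_sub]
  exact integral_bilinear_hasDerivAt_right_eq_neg_left_of_integrable
    (L := ContinuousLinearMap.lsmul ℝ ℝ) (fun r _ => hderiv r)
    (fun r _ => hasDerivAt_intervalIntegral_const_add hg.continuous h r)
    (hw.integrable_smul_of_lipschitzWith (hg_translate.sub hg))
    (hw'.integrable_smul_of_lipschitzWith hG) (hw.integrable_smul_of_lipschitzWith hG)

theorem norm_integral_smul_comp_add_sub_sub_smul_le (hg : LipschitzWith C g)
    (hderiv : ∀ r, HasDerivAt w (w' r) r) (hw : HasFiniteFirstMoment w volume)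
    (hw' : HasFiniteFirstMoment w' volume) (h : ℝ) :
    ‖(∫ r, w r • g (h + r)) - (∫ r, w r • g r) - h • -∫ r, w' r • g r‖
      ≤ C * (∫ r, ‖w' r‖) * h ^ 2 := by
  have hw'G := hw'.integrable_smul_of_lipschitzWith (lipschitzWith_intervalIntegral_const_add hg h)
  have hw'g : Integrable fun r => h • w' r • g r :=
    (hw'.integrable_smul_of_lipschitzWith hg).smul h
  have remainder : (∫ r, w r • g (h + r)) - (∫ r, w r • g r) - h • -∫ r, w' r • g r
      = -∫ r, w' r • ((∫ s in r..h + r, g s) - h • g r) := by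
    simp_rw [smul_sub, smul_comm _ h]
    rw [integral_smul_comp_add_sub_eq_neg_integral_deriv_smul hg hderiv hw hw',
      integral_sub hw'G hw'g, integral_smul]
    module
  rw [remainder, norm_neg]
  calc ‖∫ r, w' r • ((∫ s in r..h + r, g s) - h • g r)‖
      ≤ ∫ r, ‖w' r‖ * (C * h ^ 2) := by
        refine norm_integral_le_of_norm_le (hw'.integrable.norm.mul_const _)
          (ae_of_all _ fun r => ?_)
        rw [norm_smul]
        gcongr
        exact norm_intervalIntegral_const_add_sub_smul_le hg h r
    _ = C * (∫ r, ‖w' r‖) * h ^ 2 := by rw [integral_mul_const]; ring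

theorem hasDerivAt_integral_smul_comp_add (hg : LipschitzWith C g)
    (hderiv : ∀ r, HasDerivAt w (w' r) r) (hw : HasFiniteFirstMoment w volume)
    (hw' : HasFiniteFirstMoment w' volume) (t : ℝ) :
    HasDerivAt (fun t => ∫ r, w r • g (t + r)) (-∫ r, w' r • g (t + r)) t := by
  rw [hasDerivAt_iff_isLittleO_nhds_zero]
  refine (IsBigO.of_bound (C * ∫ r, ‖w' r‖) (.of_forall fun h => ?_)).trans_isLittleO
    (isLittleO_pow_id one_lt_two)
  simpa only [norm_pow, Real.norm_eq_abs, sq_abs, add_assoc] using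
    norm_integral_smul_comp_add_sub_sub_smul_le (lipschitzWith_comp_const_add hg t) hderiv hw hw' h

theorem norm_integral_deriv_smul_le (hg : LipschitzWith C g)
    (hderiv : ∀ r, HasDerivAt w (w' r) r) (hw : HasFiniteFirstMoment w volume)
    (hw' : HasFiniteFirstMoment w' volume) :
    ‖∫ r, w' r • g r‖ ≤ C * ∫ r, ‖w r‖ := by
  have hderiv_zero := hasDerivAt_integral_smul_comp_add hg hderiv hw hw' 0
  have deriv_le := hderiv_zero.le_of_lip' (by positivity)
    (.of_forall fun t => hw.norm_integral_smul_comp_add_sub_le hg t 0)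
  simpa only [norm_neg, zero_add] using deriv_le

theorem hasLineDerivAt_integral_smul_comp_line {H : Type*} [AddCommGroup H] [Module ℝ H]
    {k x : H} {b : H → E} (hb : LipschitzWith C fun r : ℝ => b (x + r • k))
    (hderiv : ∀ r, HasDerivAt w (w' r) r) (hw : HasFiniteFirstMoment w volume)
    (hw' : HasFiniteFirstMoment w' volume) :
    HasLineDerivAt ℝ (fun z => ∫ r, w r • b (z + r • k)) (-∫ r, w' r • b (x + r • k)) x k := by
  simpa only [HasLineDerivAt, add_assoc, ← add_smul, zero_add] using
    hasDerivAt_integral_smul_comp_add hb hderiv hw hw' 0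

end LipschitzOnReal

section Gaussian

theorem hasDerivAt_gaussianPDFReal (m : ℝ) (v : ℝ≥0) (x : ℝ) :
    HasDerivAt (gaussianPDFReal m v) (gaussianPDFReal m v x * (-(x - m) / v)) x := by
  have hexponent : HasDerivAt (fun x => -(x - m) ^ 2 / (2 * v)) (-(x - m) / v) x := by
    convert! (((hasDerivAt_id x).sub_const m).pow 2).neg.div_const (2 * (v : ℝ)) using 1
    simp only [id]
    ring
  rw [gaussianPDFReal, mul_assoc]
  exact hexponent.exp.const_mul (√(2 * π * v))⁻¹

theorem integrable_gaussianPDFReal_mul_pow (m : ℝ) (v : ℝ≥0) (n : ℕ) :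
    Integrable fun x => gaussianPDFReal m v x * x ^ n := by
  rcases eq_or_ne v 0 with rfl | hv
  · simp
  have hmoment : Integrable (fun x => x ^ n) (gaussianReal m v) := by
    rw [← integrable_norm_iff (by fun_prop)]
    simpa only [norm_pow] using! (memLp_id_gaussianReal (μ := m) (v := v) n).integrable_norm_pow'
  rw [gaussianReal_of_var_ne_zero m hv, integrable_withDensity_iff_integrable_smul'
    (measurable_gaussianPDF m v) (ae_of_all _ fun _ => gaussianPDF_lt_top)] at hmoment
  simpa only [toReal_gaussianPDF, smul_eq_mul] using hmoment

theorem hasFiniteFirstMoment_gaussianPDFReal (m : ℝ) (v : ℝ≥0) :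
    HasFiniteFirstMoment (gaussianPDFReal m v) volume where
  integrable := integrable_gaussianPDFReal m v
  integrable_smul_id := by simpa using integrable_gaussianPDFReal_mul_pow m v 1

theorem hasFiniteFirstMoment_deriv_gaussianPDFReal (m : ℝ) (v : ℝ≥0) :
    HasFiniteFirstMoment (fun x => gaussianPDFReal m v x * (-(x - m) / v)) volume := by
  have hmoment := integrable_gaussianPDFReal_mul_pow m v
  constructor
  · refine (((hmoment 0).mul_const (m / v)).sub ((hmoment 1).mul_const (v : ℝ)⁻¹)).congr
      (ae_of_all _ fun x => ?_)
    simp only [Pi.sub_apply]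
    ring
  · refine (((hmoment 1).mul_const (m / v)).sub ((hmoment 2).mul_const (v : ℝ)⁻¹)).congr
      (ae_of_all _ fun x => ?_)
    simp only [Pi.sub_apply, smul_eq_mul]
    ring

theorem integral_norm_gaussianPDFReal_eq_one (m : ℝ) {v : ℝ≥0} (hv : v ≠ 0) :
    ∫ x, ‖gaussianPDFReal m v x‖ = 1 := by
  simp_rw [Real.norm_of_nonneg (gaussianPDFReal_nonneg m v _)]
  exact integral_gaussianPDFReal_eq_one m hv

theorem rpow_mul_exp_eq_gaussianPDFReal (v : ℝ≥0) (r : ℝ) :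
    (2 * π * v) ^ (-(1 : ℝ) / 2) * exp (-(r ^ 2) / (2 * v)) = gaussianPDFReal 0 v r := by
  rw [gaussianPDFReal, sub_zero, sqrt_eq_rpow, ← rpow_neg (by positivity), neg_div]

end Gaussian

theorem gaussian_mollification_line_differentiable_general
    {H E : Type*} [AddCommGroup H] [Module ℝ H]
    [NormedAddCommGroup E] [NormedSpace ℝ E] [CompleteSpace E]
    {k x : H} {C : ℝ≥0} {b : H → E} (hb : LipschitzWith C fun r : ℝ => b (x + r • k))
    {ε : ℝ} (hε : 0 < ε) :
    ∃ D : E,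
      HasLineDerivAt ℝ
        (fun z => ∫ r : ℝ,
          ((2 * π * ε) ^ (-(1 : ℝ) / 2) * exp (-(r ^ 2) / (2 * ε))) • b (z + r • k))
        D x k ∧
      ‖D‖ ≤ C := by
  lift ε to ℝ≥0 using hε.le
  have hε_ne : ε ≠ 0 := by exact_mod_cast hε.ne'
  have hderiv := hasDerivAt_gaussianPDFReal 0 ε
  have hw := hasFiniteFirstMoment_gaussianPDFReal 0 ε
  have hw' := hasFiniteFirstMoment_deriv_gaussianPDFReal 0 ε
  simp_rw [rpow_mul_exp_eq_gaussianPDFReal]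
  refine ⟨_, hasLineDerivAt_integral_smul_comp_line hb hderiv hw hw', ?_⟩
  simpa only [norm_neg, integral_norm_gaussianPDFReal_eq_one 0 hε_ne, mul_one] using
    norm_integral_deriv_smul_le hb hderiv hw hw'

/-- The Gaussian mollification `b_ε` along `k` of a map `b` that is Lipschitz along `k`
has a line derivative along `k` at every point, bounded by the Lipschitz constant `L`. -/
theorem gaussian_mollification_line_differentiable
    {H E : Type*} [NormedAddCommGroup H] [NormedSpace ℝ H]
    [NormedAddCommGroup E] [NormedSpace ℝ E] [CompleteSpace E]
    (k : H) (L : ℝ) (hL : 0 ≤ L) (b : H → E)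
    (hb : ∀ (y : H) (s : ℝ), ‖b (y + s • k) - b y‖ ≤ L * |s|)
    (ε : ℝ) (hε : 0 < ε) (x : H) :
    ∃ D : E,
      HasLineDerivAt ℝ
        (fun z => ∫ r : ℝ,
          ((2 * Real.pi * ε) ^ (-(1:ℝ)/2) * Real.exp (-(r ^ 2) / (2 * ε))) • b (z + r • k))
        D x k ∧
      ‖D‖ ≤ L := by
  lift L to ℝ≥0 using hL
  exact gaussian_mollification_line_differentiable_general
    (lipschitzWith_comp_line_of_norm_sub_le hb x) hε
end
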